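/- Let X be a finite simple connected graph that is not a tree. If f is an automorphism of X acting trivially on H_1(X,ℤ), then f fixes every bridge of X and induces the identity automorphism on the block tree B(X), provided that every leaf of the block tree of X is a nontrivial block (equivalently, X has minimum degree at least 2). -/

import Mathlib

open SimpleGraph
variable {V : Type*}

variable {V : Type*}

/-- The cycle space (= first homology with coefficients in `R`) of a graph,
realized as antisymmetric flows supported on edges with zero divergence. -/
def cycleSpace (R : Type*) [CommRing R] [Fintype V] (G : SimpleGraph V) :
    Submodule R (V → V → R) where
  carrier := {f | (∀ u v, ¬ G.Adj u v → f u v = 0) ∧ (∀ u v, f u v = - f v u) ∧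
    (∀ u, ∑ v, f u v = 0)}
  add_mem' := by
    rintro f g ⟨hf1, hf2, hf3⟩ ⟨hg1, hg2, hg3⟩
    refine ⟨fun u v h => by simp [hf1 u v h, hg1 u v h], fun u v => ?_, fun u => ?_⟩
    · simp only [Pi.add_apply]; rw [hf2 u v, hg2 u v]; ring
    · simp [Finset.sum_add_distrib, hf3 u, hg3 u]
  zero_mem' := ⟨fun _ _ _ => rfl, fun _ _ => by simp, fun _ => by simp⟩
  smul_mem' := by
    rintro c f ⟨h1, h2, h3⟩
    refine ⟨fun u v h => by simp [h1 u v h], fun u v => by simp [h2 u v], fun u => ?_⟩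
    simp only [Pi.smul_apply, smul_eq_mul]
    rw [← Finset.mul_sum, h3 u, mul_zero]

/-- An automorphism acts trivially (as the identity) on `H_1(X,R)`. -/
def FixesH1 (R : Type*) [CommRing R] [Fintype V] (G : SimpleGraph V) (f : G ≃g G) : Prop :=
  ∀ c ∈ cycleSpace R G, ∀ u v : V, c (f u) (f v) = c u v

/-- A subgraph is 2-connected: at least two vertices, and deleting at most one
vertex leaves it connected. (An edge with its endpoints counts as 2-connected.) -/
def IsTwoConnectedSub (G : SimpleGraph V) (H : G.Subgraph) : Prop :=
  2 ≤ H.verts.ncard ∧ ∀ s : Set V, s.ncard ≤ 1 → ((H.deleteVerts s).coe).Connected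

/-- A block: a maximal 2-connected subgraph. -/
def IsBlock (G : SimpleGraph V) (B : G.Subgraph) : Prop :=
  IsTwoConnectedSub G B ∧ ∀ K : G.Subgraph, IsTwoConnectedSub G K → B ≤ K → K = B

/-- A cutvertex: a vertex whose deletion disconnects the graph. -/
def IsCutvertex (G : SimpleGraph V) (v : V) : Prop :=
  ¬ (((⊤ : G.Subgraph).deleteVerts {v}).coe).Connected

/-!
Let `c` be a cycle. Its signed flow is a cycle-space element with values `±1` on the edges of `c`
and `0` elsewhere, so an automorphism `f` acting trivially on homology maps the edge set of `c` into
itself.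

If `f v ≠ v`, then `f v` lies in every component `K` of `G - v` containing a neighbour of `v`: by
minimum degree `2`, `K ∪ {v}` contains a cycle, so some `x ∈ K` has `f x ∈ K ∪ {v}`; were `f v`
outside `K`, the connected set `K ∪ {v}` would lie in `f '' K`, the component of `f x` in `G - f v`,
which has too few vertices. As `f v` cannot lie in two components, every vertex separating two of
its neighbours is fixed. This covers cutvertices and ends of bridges.

Finally, an edge of a block `B` is either a bridge, with fixed ends, or lies on a cycle contained in
`B` and preserved by `f`. Either way `B` and `f B` share two vertices, hence coincide.
-/

section Flow

variable (R : Type*) [CommRing R] {G : SimpleGraph V}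

/-- The signed flow of a walk, that is, its class as a `1`-chain with coefficients in `R`: the
value at `(a, b)` is the number of traversals from `a` to `b` minus the number from `b` to `a`. -/
def walkFlow [DecidableEq V] {u v : V} (p : G.Walk u v) (a b : V) : R :=
  ((p.darts.map Dart.toProd).count (a, b) : R) - (p.darts.map Dart.toProd).count (b, a)

lemma sum_walkFlow [Fintype V] [DecidableEq V] {u v : V} (p : G.Walk u v) (a : V) :
    ∑ b, walkFlow R p a b = (if a = u then 1 else 0) - if a = v then 1 else 0 := by
  induction p with
  | nil => simp [walkFlow]
  | @cons u w v h p ih =>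
    have hcons (b : V) : walkFlow R (.cons h p) a b =
        (if u = a then if w = b then 1 else 0 else 0) -
          (if w = a then if u = b then 1 else 0 else 0) + walkFlow R p a b := by
      simp only [walkFlow, Walk.darts_cons, List.map_cons, List.count_cons, beq_iff_eq,
        Prod.mk.injEq, Nat.cast_add, Nat.cast_ite, Nat.cast_one, Nat.cast_zero, ite_and]
      split_ifs <;> ring
    simp only [hcons, Finset.sum_add_distrib, Finset.sum_sub_distrib, ih, Finset.sum_ite_irrel,
      Finset.sum_ite_eq, Finset.mem_univ, if_true, Finset.sum_const_zero, eq_comm (b := a)]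
    ring

lemma count_edges_eq_add_count_darts [DecidableEq V] {u v a b : V} (p : G.Walk u v)
    (hab : a ≠ b) : p.edges.count s(a, b) =
      (p.darts.map Dart.toProd).count (a, b) + (p.darts.map Dart.toProd).count (b, a) := by
  induction p with
  | nil => simp
  | @cons u w v h p ih =>
    simp only [Walk.edges_cons, Walk.darts_cons, List.map_cons, List.count_cons, ih, beq_iff_eq,
      Prod.mk.injEq, Sym2.eq_iff]
    grind

variable {R}

lemma mem_edges_of_walkFlow_ne_zero [DecidableEq V] {u v a b : V} {p : G.Walk u v}
    (h : walkFlow R p a b ≠ 0) : s(a, b) ∈ p.edges := by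
  have hab : a ≠ b := by
    rintro rfl
    exact h (sub_self _)
  contrapose! h
  have hcount := count_edges_eq_add_count_darts p hab
  rw [List.count_eq_zero_of_not_mem h, eq_comm, Nat.add_eq_zero_iff] at hcount
  simp [walkFlow, hcount]

lemma walkFlow_ne_zero_of_mem_edges [Nontrivial R] [DecidableEq V] {u v a b : V} {p : G.Walk u v}
    (hp : p.IsTrail) (h : s(a, b) ∈ p.edges) : walkFlow R p a b ≠ 0 := by
  have hcount := count_edges_eq_add_count_darts p (p.adj_of_mem_edges h).ne
  rw [List.count_eq_one_of_mem hp.edges_nodup h, eq_comm, Nat.add_eq_one_iff] at hcount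
  rcases hcount with hcount | hcount <;> simp [walkFlow, hcount]

lemma walkFlow_mem_cycleSpace [Fintype V] [DecidableEq V] {u : V} (c : G.Walk u u) :
    walkFlow R c ∈ cycleSpace R G := by
  refine ⟨fun a b hab ↦ ?_, fun a b ↦ (neg_sub _ _).symm, fun a ↦ ?_⟩
  · by_contra hne
    exact hab (c.adj_of_mem_edges (mem_edges_of_walkFlow_ne_zero hne))
  · rw [sum_walkFlow, sub_self]

lemma FixesH1.map_mem_edges [Nontrivial R] [Fintype V] {f : G ≃g G} (hf : FixesH1 R G f) {u x y : V}
    {c : G.Walk u u} (hc : c.IsTrail) (h : s(x, y) ∈ c.edges) : s(f x, f y) ∈ c.edges := by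
  classical
  apply mem_edges_of_walkFlow_ne_zero (R := R)
  rw [hf _ (walkFlow_mem_cycleSpace c)]
  exact walkFlow_ne_zero_of_mem_edges hc h

end Flow

section TwoConnected

variable {W : Type*} {G' : SimpleGraph W} {G : SimpleGraph V}

lemma sup_deleteVerts (H K : G.Subgraph) (s : Set V) :
    (H ⊔ K).deleteVerts s = H.deleteVerts s ⊔ K.deleteVerts s := by
  ext a b
  · simp [or_and_right]
  · simp only [Subgraph.deleteVerts_adj, Subgraph.sup_adj, Subgraph.verts_sup, Set.mem_union]
    constructor
    · rintro ⟨-, ha, -, hb, h | h⟩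
      · exact .inl ⟨h.fst_mem, ha, h.snd_mem, hb, h⟩
      · exact .inr ⟨h.fst_mem, ha, h.snd_mem, hb, h⟩
    · tauto

lemma map_deleteVerts_preimage (f : G →g G') (H : G.Subgraph) (s : Set W) :
    (H.deleteVerts (f ⁻¹' s)).map f = (H.map f).deleteVerts s := by
  ext a b
  · simp only [Subgraph.map_verts, Subgraph.deleteVerts_verts, Set.image_sdiff_preimage]
  · simp only [Subgraph.map_adj, Relation.Map, Subgraph.deleteVerts_adj, Subgraph.map_verts]
    constructor
    · rintro ⟨x, y, ⟨hx, hxs, hy, hys, h⟩, rfl, rfl⟩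
      exact ⟨⟨x, hx, rfl⟩, hxs, ⟨y, hy, rfl⟩, hys, x, y, h, rfl, rfl⟩
    · rintro ⟨-, has, -, hbs, x, y, h, rfl, rfl⟩
      exact ⟨x, y, ⟨h.fst_mem, has, h.snd_mem, hbs, h⟩, rfl, rfl⟩

lemma connected_subgraph_map (f : G →g G') {H : G.Subgraph} (hH : H.Connected) :
    (H.map f).Connected := by
  rw [Subgraph.connected_iff'] at hH ⊢
  let g : H.coe →g (H.map f).coe :=
    ⟨fun x ↦ ⟨f x, x, x.2, rfl⟩, fun {x y} h ↦ ⟨x, y, h, rfl, rfl⟩⟩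
  refine hH.map g ?_
  rintro ⟨_, x, hx, rfl⟩
  exact ⟨⟨x, hx⟩, rfl⟩

namespace IsTwoConnectedSub

lemma connected_deleteVerts {H : G.Subgraph} (hH : IsTwoConnectedSub G H) {s : Set V}
    (hs : s.ncard ≤ 1) : (H.deleteVerts s).Connected :=
  Subgraph.connected_iff'.2 (hH.2 s hs)

lemma exists_adj {H : G.Subgraph} (hH : IsTwoConnectedSub G H) : ∃ x y, H.Adj x y := by
  have hconn : H.Connected := by simpa using hH.connected_deleteVerts (s := ∅) (by simp)
  obtain ⟨x, hx, y, hy, hxy⟩ := Set.one_lt_ncard_iff_nontrivial_and_finite.1 hH.1 |>.1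
  have : Nontrivial H.verts := ⟨⟨x, hx⟩, ⟨y, hy⟩, by simpa using hxy⟩
  obtain ⟨z, hz⟩ := hconn.preconnected.exists_adj_of_nontrivial ⟨x, hx⟩
  exact ⟨x, z, hz⟩

lemma map [Finite W] {f : G →g G'} (hf : Function.Injective f) {H : G.Subgraph}
    (hH : IsTwoConnectedSub G H) : IsTwoConnectedSub G' (H.map f) := by
  refine ⟨hH.1.trans_eq (Set.ncard_image_of_injective _ hf).symm, fun s hs ↦ ?_⟩
  have hs' : (f ⁻¹' s).ncard ≤ 1 := by
    rw [← Set.ncard_image_of_injective _ hf]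
    exact (Set.ncard_le_ncard (Set.image_preimage_subset f s)).trans hs
  rw [← Subgraph.connected_iff', ← map_deleteVerts_preimage]
  exact connected_subgraph_map f (hH.connected_deleteVerts hs')

lemma sup [Finite V] {H K : G.Subgraph} (hH : IsTwoConnectedSub G H)
    (hK : IsTwoConnectedSub G K) {x y : V} (hxy : x ≠ y) (hxH : x ∈ H.verts) (hyH : y ∈ H.verts)
    (hxK : x ∈ K.verts) (hyK : y ∈ K.verts) : IsTwoConnectedSub G (H ⊔ K) := by
  refine ⟨hH.1.trans (Set.ncard_le_ncard Set.subset_union_left), fun s hs ↦ ?_⟩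
  have hcommon : (H.deleteVerts s ⊓ K.deleteVerts s).verts.Nonempty := by
    by_cases hx : x ∈ s
    · have hy : y ∉ s := fun hy ↦ hxy (Set.ncard_le_one_iff_subsingleton.1 hs hx hy)
      exact ⟨y, ⟨hyH, hy⟩, ⟨hyK, hy⟩⟩
    · exact ⟨x, ⟨hxH, hx⟩, ⟨hxK, hx⟩⟩
  rw [← Subgraph.connected_iff', sup_deleteVerts]
  exact Subgraph.connected_sup (hH.connected_deleteVerts hs).preconnected
    (hK.connected_deleteVerts hs).preconnected hcommon

end IsTwoConnectedSub

lemma le_deleteVerts {H K : G.Subgraph} {s : Set V} (hHK : H ≤ K) (hs : Disjoint H.verts s) :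
    H ≤ K.deleteVerts s := by
  have hmem {a : V} (ha : a ∈ H.verts) : a ∈ K.verts \ s := ⟨hHK.1 ha, hs.notMem_of_mem_left ha⟩
  exact ⟨fun _ ↦ hmem, fun _ _ h ↦ ⟨hmem h.fst_mem, hmem h.snd_mem, hHK.2 h⟩⟩

lemma connected_deleteVerts_end_of_isPath {u v : V} {p : G.Walk u v} (hp : p.IsPath)
    (hnil : ¬ p.Nil) : (p.toSubgraph.deleteVerts {v}).Connected := by
  have hsupp := Walk.support_dropLast_concat hnil
  have hv : v ∉ p.dropLast.support := by
    have hnodup := hsupp ▸ hp.support_nodup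
    exact fun h ↦ List.disjoint_of_nodup_append hnodup h (List.mem_singleton_self v)
  have hverts : p.dropLast.toSubgraph.verts = p.toSubgraph.verts \ {v} := by
    ext w
    simp only [Walk.mem_verts_toSubgraph, Set.mem_sdiff, ← hsupp, List.mem_append,
      List.mem_singleton, Set.mem_singleton_iff]
    grind
  have hle : p.dropLast.toSubgraph ≤ p.toSubgraph := by
    conv_rhs => rw [← p.concat_dropLast (p.adj_penultimate hnil), Walk.concat_eq_append,
      Walk.toSubgraph_append]
    exact le_sup_left
  refine p.dropLast.toSubgraph_connected.mono (le_deleteVerts hle ?_) hverts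
  rw [hverts]
  exact Set.disjoint_sdiff_left

lemma connected_deleteVerts_start_of_isCycle {u : V} {c : G.Walk u u} (hc : c.IsCycle) :
    (c.toSubgraph.deleteVerts {u}).Connected := by
  have hsnd := (c.adj_snd hc.not_nil).ne'
  have htail : c.tail.toSubgraph ≤ c.toSubgraph := by
    conv_rhs => rw [← c.cons_tail_eq hc.not_nil]
    exact le_sup_right
  have hverts : c.tail.toSubgraph.verts = c.toSubgraph.verts := by
    ext w
    rw [Walk.mem_verts_toSubgraph, Walk.mem_verts_toSubgraph, ← c.cons_support_tail hc.not_nil,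
      List.mem_cons, iff_or_self]
    rintro rfl
    exact c.tail.end_mem_support
  exact (connected_deleteVerts_end_of_isPath hc.isPath_tail (Walk.not_nil_of_ne hsnd)).mono
    (Subgraph.deleteVerts_mono htail) (by simp only [Subgraph.deleteVerts_verts, hverts])

lemma isTwoConnectedSub_toSubgraph_of_isCycle [Finite V] {u : V} {c : G.Walk u u}
    (hc : c.IsCycle) : IsTwoConnectedSub G c.toSubgraph := by
  classical
  refine ⟨?_, fun s hs ↦ Subgraph.connected_iff'.1 ?_⟩
  · rw [← Set.ncard_pair (c.adj_snd hc.not_nil).ne]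
    refine Set.ncard_le_ncard ?_
    simp [Set.insert_subset_iff]
  by_cases hdisj : Disjoint c.toSubgraph.verts s
  · exact c.toSubgraph_connected.mono (le_deleteVerts le_rfl hdisj) hdisj.sdiff_eq_left.symm
  · obtain ⟨t, ht, hts⟩ := Set.not_disjoint_iff.1 hdisj
    obtain rfl : s = {t} := (Set.ncard_le_one_iff_subsingleton.1 hs).eq_singleton_of_mem hts
    rw [Walk.mem_verts_toSubgraph] at ht
    rw [← c.toSubgraph_rotate ht]
    exact connected_deleteVerts_start_of_isCycle (hc.rotate ht)

namespace IsBlock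

lemma le_of_mem [Finite V] {B H : G.Subgraph} (hB : IsBlock G B) (hH : IsTwoConnectedSub G H)
    {x y : V} (hxy : x ≠ y) (hxB : x ∈ B.verts) (hyB : y ∈ B.verts) (hxH : x ∈ H.verts)
    (hyH : y ∈ H.verts) : H ≤ B :=
  le_sup_right.trans_eq (hB.2 _ (hB.1.sup hH hxy hxB hyB hxH hyH) le_sup_left)

lemma eq_of_mem [Finite V] {B C : G.Subgraph} (hB : IsBlock G B) (hC : IsBlock G C)
    {x y : V} (hxy : x ≠ y) (hxB : x ∈ B.verts) (hyB : y ∈ B.verts) (hxC : x ∈ C.verts)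
    (hyC : y ∈ C.verts) : B = C :=
  le_antisymm (hC.le_of_mem hB.1 hxy hxC hyC hxB hyB) (hB.le_of_mem hC.1 hxy hxB hyB hxC hyC)

lemma map [Finite V] (f : G ≃g G') {B : G.Subgraph} (hB : IsBlock G B) :
    IsBlock G' (B.map f.toHom) := by
  have : Finite W := .of_equiv V f.toEquiv
  refine ⟨hB.1.map f.injective, fun K hK hBK ↦ ?_⟩
  have hback : (B.map f.toHom).map f.symm.toHom = B := by
    rw [← Subgraph.map_comp, f.symm_toHom_comp_toHom, Subgraph.map_id]
  have hK' : K.map f.symm.toHom = B :=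
    hB.2 _ (hK.map f.symm.injective) (hback ▸ Subgraph.map_mono hBK)
  rw [← hK', ← Subgraph.map_comp, f.toHom_comp_symm_toHom, Subgraph.map_id]

end IsBlock

end TwoConnected

section Branch

variable {W : Type*} {G' : SimpleGraph W} {G : SimpleGraph V} {v a b : V}

/-- The branch of `G` at `v` containing `a`: the component of `a` in `G - v`. Since
`deleteIncidenceSet` keeps `v` as an isolated vertex, this is meaningful only for `a ≠ v`. -/
def branch (G : SimpleGraph V) (v a : V) : Set V :=
  {b | (G.deleteIncidenceSet v).Reachable a b}

lemma self_mem_branch (G : SimpleGraph V) (v a : V) : a ∈ branch G v a := Reachable.rfl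

lemma notMem_branch (h : a ≠ v) : v ∉ branch G v a := by
  rintro ⟨p⟩
  exact (deleteIncidenceSet_adj.1 (p.adj_penultimate (Walk.not_nil_of_ne h))).2.2 rfl

lemma mem_branch_of_adj {c : V} (hb : b ∈ branch G v a) (hbv : b ≠ v) (hcv : c ≠ v)
    (hbc : G.Adj b c) : c ∈ branch G v a :=
  hb.trans (deleteIncidenceSet_adj.2 ⟨hbc, hbv, hcv⟩).reachable

lemma connected_induce_branch (G : SimpleGraph V) (v a : V) :
    (G.induce (branch G v a)).Connected := by
  have hsupp : branch G v a = ((G.deleteIncidenceSet v).connectedComponentMk a).supp := by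
    ext b
    exact ⟨fun h ↦ ConnectedComponent.sound h.symm, fun h ↦ (ConnectedComponent.exact h).symm⟩
  rw [hsupp]
  exact (ConnectedComponent.maximal_connected_induce_supp _).prop.mono
    (comap_monotone _ (G.deleteIncidenceSet_le v))

lemma connected_induce_insert_branch (h : G.Adj v a) :
    (G.induce (insert v (branch G v a))).Connected :=
  connected_induce_union (s := {v}) .of_subsingleton
    (connected_induce_branch G v a).preconnected rfl (self_mem_branch G v a) h

lemma subset_branch_of_preconnected_induce {s : Set V} (hs : (G.induce s).Preconnected)
    (hv : v ∉ s) (ha : a ∈ s) : s ⊆ branch G v a := by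
  intro b hb
  let g : G.induce s →g G.deleteIncidenceSet v :=
    ⟨Subtype.val, fun {x y} h ↦ deleteIncidenceSet_adj.2
      ⟨h, ne_of_mem_of_not_mem x.2 hv, ne_of_mem_of_not_mem y.2 hv⟩⟩
  exact (hs ⟨a, ha⟩ ⟨b, hb⟩).map g

lemma apply_mem_branch_apply {f : G →g G'} (hf : Function.Injective f) (hb : b ∈ branch G v a) :
    f b ∈ branch G' (f v) (f a) := by
  let g : G.deleteIncidenceSet v →g G'.deleteIncidenceSet (f v) :=
    ⟨f, fun h ↦ by
      rw [deleteIncidenceSet_adj] at h ⊢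
      exact ⟨f.map_adj h.1, hf.ne h.2.1, hf.ne h.2.2⟩⟩
  exact Reachable.map g hb

lemma exists_isCycle_support_subset_insert_branch [Finite V] (h : G.Adj v a)
    (hdeg : ∀ w ∈ branch G v a, 2 ≤ (G.neighborSet w).ncard) :
    ∃ (u : V) (c : G.Walk u u), c.IsCycle ∧ ∀ w ∈ c.support, w ∈ insert v (branch G v a) := by
  classical
  set S := insert v (branch G v a)
  have haS : a ∈ S := .inr (self_mem_branch G v a)
  suffices hcyc : ¬ (G.induce S).IsAcyclic by
    simp only [IsAcyclic, not_forall, not_not] at hcyc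
    obtain ⟨u, c, hc⟩ := hcyc
    refine ⟨_, c.map (Embedding.induce S).toHom, hc.map Subtype.val_injective, fun w hw ↦ ?_⟩
    rw [Walk.support_map, List.mem_map] at hw
    obtain ⟨x, -, rfl⟩ := hw
    exact x.2
  intro hacyc
  have htree : (G.induce S).IsTree := ⟨connected_induce_insert_branch h, hacyc⟩
  have : Nontrivial S := ⟨⟨v, .inl rfl⟩, ⟨a, haS⟩, Subtype.coe_ne_coe.1 h.ne⟩
  have := Fintype.ofFinite S
  obtain ⟨w, hw, hwv⟩ : ∃ w : S, (G.induce S).degree w = 1 ∧ w.1 ≠ v := by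
    obtain ⟨x, y, hxy, hx, hy⟩ := htree.exists_ne_and_degree_eq_one
    by_cases hxv : x.1 = v
    · exact ⟨y, hy, fun hyv ↦ hxy (Subtype.ext (hxv.trans hyv.symm))⟩
    · exact ⟨x, hx, hxv⟩
  obtain ⟨m, -, hm⟩ := degree_eq_one_iff_existsUnique_adj.1 hw
  have hwb : w.1 ∈ branch G v a := w.2.resolve_left hwv
  obtain ⟨z, hz, hzm⟩ := Set.exists_ne_of_one_lt_ncard (hdeg w hwb) m.1
  have hzS : z ∈ S := or_iff_not_imp_left.2 fun hzv ↦ mem_branch_of_adj hwb hwv hzv hz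
  exact hzm (congrArg Subtype.val (hm ⟨z, hzS⟩ hz))

lemma notMem_branch_of_isBridge {u z : V} (hb : G.IsBridge s(u, v)) (huz : G.Adj u z)
    (hzv : z ≠ v) : z ∉ branch G u v := by
  intro hz
  have hle : G.deleteIncidenceSet u ≤ G.deleteEdges {s(u, v)} := by
    intro x y hxy
    rw [deleteIncidenceSet_adj] at hxy
    rw [deleteEdges_adj]
    refine ⟨hxy.1, ?_⟩
    simp only [Set.mem_singleton_iff, Sym2.eq_iff]
    tauto
  have huz' : (G.deleteEdges {s(u, v)}).Adj u z := by
    rw [deleteEdges_adj]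
    exact ⟨huz, by simp [hzv, huz.ne']⟩
  exact isBridge_iff.1 hb (huz'.reachable.trans (hz.mono hle).symm)

lemma IsCutvertex.exists_adj_notMem_branch (hG : G.Preconnected) (hva : G.Adj v a)
    (hv : IsCutvertex G v) : ∃ b, G.Adj v b ∧ b ∉ branch G v a := by
  contrapose! hv
  have hbranch : branch G v a = (⊤ : G.Subgraph).verts \ {v} := by
    ext w
    refine ⟨fun hw ↦ ⟨trivial, ne_of_mem_of_not_mem hw (notMem_branch hva.ne')⟩, fun ⟨_, hwv⟩ ↦ ?_⟩
    obtain ⟨p, hp⟩ := (hG v w).exists_isPath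
    cases p with
    | nil => exact absurd rfl hwv
    | @cons _ b _ hvb q =>
      have hq := subset_branch_of_preconnected_induce q.connected_induce_support.preconnected
        ((Walk.cons_isPath_iff _ _).1 hp).2 q.start_mem_support
      exact (hv b hvb).trans (hq q.end_mem_support)
  have hconn := connected_induce_iff.1 (connected_induce_branch G v a)
  rw [hbranch] at hconn
  exact not_not.2 (Subgraph.connected_iff'.1 hconn)

end Branch

section Fixed

variable {R : Type*} [CommRing R] [Nontrivial R] [Fintype V] {G : SimpleGraph V} {f : G ≃g G}

namespace FixesH1

lemma apply_mem_support (hf : FixesH1 R G f) {u x : V} {c : G.Walk u u} (hc : c.IsCycle)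
    (hx : x ∈ c.support) : f x ∈ c.support := by
  obtain ⟨e, he, hxe⟩ := (c.mem_support_iff_exists_mem_edges_of_not_nil hc.not_nil).1 hx
  obtain ⟨y, rfl⟩ := hxe
  exact c.fst_mem_support_of_mem_edges (hf.map_mem_edges hc.isTrail he)

lemma apply_mem_branch (hmin : ∀ v : V, 2 ≤ (G.neighborSet v).ncard) (hf : FixesH1 R G f)
    {v a : V} (h : G.Adj v a) (hv : f v ≠ v) : f v ∈ branch G v a := by
  by_contra hfv
  set K := branch G v a
  obtain ⟨x, hx, hfx⟩ : ∃ x ∈ K, f x ∈ insert v K := by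
    obtain ⟨u, c, hc, hcK⟩ := exists_isCycle_support_subset_insert_branch h fun w _ ↦ hmin w
    obtain ⟨x, hxc, hxv⟩ : ∃ x ∈ c.support, x ≠ v := by
      by_cases huv : u = v
      · exact ⟨c.snd, c.getVert_mem_support 1, huv ▸ (c.adj_snd hc.not_nil).ne'⟩
      · exact ⟨u, c.start_mem_support, huv⟩
    exact ⟨x, (hcK x hxc).resolve_left hxv, hcK _ (hf.apply_mem_support hc hxc)⟩
  have hsub : insert v K ⊆ branch G (f v) (f x) :=
    subset_branch_of_preconnected_induce (connected_induce_insert_branch h).preconnected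
      (by simp [hv, hfv]) hfx
  have himage : f.symm '' insert v K ⊆ K := by
    rintro _ ⟨y, hy, rfl⟩
    have hback : f.symm y ∈ branch G v x := by
      simpa using apply_mem_branch_apply (f := f.symm.toHom) f.symm.injective (hsub hy)
    exact hx.trans hback
  have hcard := Set.ncard_le_ncard himage
  rw [Set.ncard_image_of_injective _ f.symm.injective,
    Set.ncard_insert_of_notMem (notMem_branch h.ne')] at hcard
  exact K.ncard.not_succ_le_self hcard

lemma apply_eq_of_notMem_branch (hmin : ∀ v : V, 2 ≤ (G.neighborSet v).ncard)
    (hf : FixesH1 R G f) {v a b : V} (ha : G.Adj v a) (hb : G.Adj v b)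
    (hab : b ∉ branch G v a) : f v = v := by
  by_contra hv
  exact hab ((hf.apply_mem_branch hmin ha hv).trans (hf.apply_mem_branch hmin hb hv).symm)

lemma apply_eq_of_isBridge (hmin : ∀ v : V, 2 ≤ (G.neighborSet v).ncard)
    (hf : FixesH1 R G f) {u v : V} (h : G.Adj u v) (hb : G.IsBridge s(u, v)) : f u = u := by
  obtain ⟨z, huz, hzv⟩ := Set.exists_ne_of_one_lt_ncard (hmin u) v
  exact hf.apply_eq_of_notMem_branch hmin h huz (notMem_branch_of_isBridge hb huz hzv)

lemma apply_eq_of_isCutvertex (hmin : ∀ v : V, 2 ≤ (G.neighborSet v).ncard)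
    (hf : FixesH1 R G f) (hG : G.Preconnected) {v : V} (hv : IsCutvertex G v) : f v = v := by
  obtain ⟨a, hva⟩ := Set.nonempty_of_ncard_ne_zero (by grind : (G.neighborSet v).ncard ≠ 0)
  obtain ⟨b, hvb, hb⟩ := hv.exists_adj_notMem_branch hG hva
  exact hf.apply_eq_of_notMem_branch hmin hva hvb hb

lemma apply_mem_of_isBlock (hf : FixesH1 R G f) {B : G.Subgraph} (hB : IsBlock G B) {x y : V}
    (hxy : B.Adj x y) (hbridge : ¬ G.IsBridge s(x, y)) : f x ∈ B.verts := by
  obtain ⟨u, c, hc, hmem⟩ : ∃ (u : V) (c : G.Walk u u), c.IsCycle ∧ s(x, y) ∈ c.edges := by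
    simpa [isBridge_iff_forall_cycle_notMem ((mem_edgeSet G).2 hxy.adj_sub)] using hbridge
  have hx := c.fst_mem_support_of_mem_edges hmem
  have hcB : c.toSubgraph ≤ B :=
    hB.le_of_mem (isTwoConnectedSub_toSubgraph_of_isCycle hc) hxy.ne hxy.fst_mem hxy.snd_mem
      (c.mem_verts_toSubgraph.2 hx) (c.mem_verts_toSubgraph.2 (c.snd_mem_support_of_mem_edges hmem))
  exact hcB.1 (c.mem_verts_toSubgraph.2 (hf.apply_mem_support hc hx))

lemma map_block (hmin : ∀ v : V, 2 ≤ (G.neighborSet v).ncard) (hf : FixesH1 R G f)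
    {B : G.Subgraph} (hB : IsBlock G B) : B.map f.toHom = B := by
  have hmem {x y : V} (hxy : B.Adj x y) : f x ∈ B.verts := by
    by_cases hbridge : G.IsBridge s(x, y)
    · rw [hf.apply_eq_of_isBridge hmin hxy.adj_sub hbridge]
      exact hxy.fst_mem
    · exact hf.apply_mem_of_isBlock hB hxy hbridge
  obtain ⟨x, y, hxy⟩ := hB.1.exists_adj
  exact (hB.map f).eq_of_mem hB (f.injective.ne hxy.ne) ⟨x, hxy.fst_mem, rfl⟩
    ⟨y, hxy.snd_mem, rfl⟩ (hmem hxy) (hmem hxy.symm)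

end FixesH1

end Fixed

theorem kernel_fixes_bridges_and_blockTree_general (R : Type*) [CommRing R] [Nontrivial R]
    [Fintype V] (G : SimpleGraph V) (hG : G.Connected)
    (hmin : ∀ v : V, 2 ≤ (G.neighborSet v).ncard)
    (f : G ≃g G) (hf : FixesH1 R G f) :
    (∀ u v : V, G.Adj u v → G.IsBridge s(u, v) → f u = u ∧ f v = v) ∧
    (∀ B : G.Subgraph, IsBlock G B → B.map f.toHom = B) ∧
    (∀ v : V, IsCutvertex G v → f v = v) := by
  refine ⟨fun u v h hb ↦ ⟨hf.apply_eq_of_isBridge hmin h hb, ?_⟩, fun _ ↦ hf.map_block hmin,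
    fun _ ↦ hf.apply_eq_of_isCutvertex hmin hG.preconnected⟩
  exact hf.apply_eq_of_isBridge hmin h.symm (Sym2.eq_swap ▸ hb)

theorem kernel_fixes_bridges_and_blockTree [Fintype V] (G : SimpleGraph V)
    (hG : G.Connected) (hnt : ¬ G.IsAcyclic)
    (hmin : ∀ v : V, 2 ≤ (G.neighborSet v).ncard)
    (f : G ≃g G) (hf : FixesH1 ℤ G f) :
    (∀ u v : V, G.Adj u v → G.IsBridge s(u, v) → s(f u, f v) = s(u, v)) ∧
    (∀ B : G.Subgraph, IsBlock G B → B.map f.toHom = B) ∧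
    (∀ v : V, IsCutvertex G v → f v = v) := by
  obtain ⟨hbridge, hrest⟩ := kernel_fixes_bridges_and_blockTree_general ℤ G hG hmin f hf
  exact ⟨fun u v h hb ↦ congrArg₂ (s(·, ·)) (hbridge u v h hb).1 (hbridge u v h hb).2, hrest⟩
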